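/- Let (C, δ) and (D, ∂) be S¹-complexes over a commutative ring K and let κ = (κ₀, κ₁, …) be an S¹-equivariant chain map between them. If κ₀ : (C, δ₀) → (D, ∂₀) is a quasi-isomorphism, then the induced map κ^{S¹} : C^∧ → D^∧ induces an isomorphism on periodic cyclic homology HĈ_*(C) ≅ HĈ_*(D). -/

import Mathlib

open Finset DirectSum

set_option maxHeartbeats 1000000
set_option synthInstance.maxHeartbeats 1000000

noncomputable section Lib

variable (K : Type) [CommRing K]

/-- Transport of graded components along an equality of degrees. -/
def pcast (F : ℤ → Type) [∀ n, AddCommGroup (F n)] [∀ n, Module K (F n)]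
    {a b : ℤ} (h : a = b) : F a →ₗ[K] F b := by subst h; exact LinearMap.id

/-- Transport of graded components along an equality of degrees when it holds
(and the zero map otherwise). -/
def tr (F : ℤ → Type) [∀ n, AddCommGroup (F n)] [∀ n, Module K (F n)]
    (a b : ℤ) : F a →ₗ[K] F b := if h : a = b then pcast K F h else 0

variable (C : ℤ → Type) [∀ n, AddCommGroup (C n)] [∀ n, Module K (C n)]
variable (D : ℤ → Type) [∀ n, AddCommGroup (D n)] [∀ n, Module K (D n)]
variable (E : ℤ → Type) [∀ n, AddCommGroup (E n)] [∀ n, Module K (E n)]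

/-- An S¹-structure on a ℤ-graded `K`-module `C`: a sequence of operations
`δ i : Cⁿ → C^{n+1-2i}` with `∑_{i+j=k} δ i ∘ δ j = 0` for all `k ≥ 0`. -/
structure S1Struct where
  δ : (i : ℕ) → (n : ℤ) → C n →ₗ[K] C (n + 1 - 2 * (i : ℤ))
  rel : ∀ (k : ℕ) (n : ℤ) (x : C n),
    ∑ p ∈ antidiagonal k,
      tr K C (n + 1 - 2 * (p.2 : ℤ) + 1 - 2 * (p.1 : ℤ)) (n + 2 - 2 * (k : ℤ))
        (δ p.1 (n + 1 - 2 * (p.2 : ℤ)) (δ p.2 n x)) = 0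

/-- An S¹-equivariant chain map between S¹-complexes: a sequence of operations
`κ i : Cⁿ → D^{n-2i}` with `∑_{i+j=k} (κ i ∘ δ j - ∂ j ∘ κ i) = 0` for all `k ≥ 0`. -/
structure S1Map (S : S1Struct K C) (T : S1Struct K D) where
  κ : (i : ℕ) → (n : ℤ) → C n →ₗ[K] D (n - 2 * (i : ℤ))
  rel : ∀ (k : ℕ) (n : ℤ) (x : C n),
    ∑ p ∈ antidiagonal k,
      (tr K D (n + 1 - 2 * (p.2 : ℤ) - 2 * (p.1 : ℤ)) (n + 1 - 2 * (k : ℤ))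
          (κ p.1 (n + 1 - 2 * (p.2 : ℤ)) (S.δ p.2 n x))
        - tr K D (n - 2 * (p.1 : ℤ) + 1 - 2 * (p.2 : ℤ)) (n + 1 - 2 * (k : ℤ))
          (T.δ p.2 (n - 2 * (p.1 : ℤ)) (κ p.1 n x))) = 0

/-- An S¹-equivariant chain homotopy between two S¹-equivariant chain maps: a sequence
of operations `h i : Cⁿ → D^{n-2i-1}` with
`κ k - κ' k = ∑_{i+j=k} (h i ∘ δ j + ∂ j ∘ h i)` for all `k ≥ 0`. -/
structure S1Homotopy {S : S1Struct K C} {T : S1Struct K D} (κ κ' : S1Map K C D S T) where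
  h : (i : ℕ) → (n : ℤ) → C n →ₗ[K] D (n - 2 * (i : ℤ) - 1)
  rel : ∀ (k : ℕ) (n : ℤ) (x : C n),
    κ.κ k n x - κ'.κ k n x =
      ∑ p ∈ antidiagonal k,
        (tr K D (n + 1 - 2 * (p.2 : ℤ) - 2 * (p.1 : ℤ) - 1) (n - 2 * (k : ℤ))
            (h p.1 (n + 1 - 2 * (p.2 : ℤ)) (S.δ p.2 n x))
          + tr K D (n - 2 * (p.1 : ℤ) - 1 + 1 - 2 * (p.2 : ℤ)) (n - 2 * (k : ℤ))
            (T.δ p.2 (n - 2 * (p.1 : ℤ) - 1) (h p.1 n x)))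

/-- The degree `n` part of the negative cyclic complex `C⁻ = C[[u]]`:
formal power series `∑_{i ≥ 0} aᵢ uⁱ` with `aᵢ ∈ C^{n-2i}`. -/
abbrev NegCyc (n : ℤ) : Type := (i : ℕ) → C (n - 2 * (i : ℤ))

/-- The componentwise extension `(∑ uⁱ F i) (∑ aⱼ uʲ) = ∑_k (∑_{i+j=k} F i (aⱼ)) u^k`
of a sequence of operations `F i` of degree `e - 2i` to the power series complexes. -/
def nExt (e : ℤ) (F : (i : ℕ) → (m : ℤ) → C m →ₗ[K] D (m + e - 2 * (i : ℤ))) (n t : ℤ) :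
    NegCyc C n →ₗ[K] NegCyc D t where
  toFun x k := ∑ p ∈ antidiagonal k,
    tr K D (n - 2 * (p.2 : ℤ) + e - 2 * (p.1 : ℤ)) (t - 2 * (k : ℤ))
      (F p.1 (n - 2 * (p.2 : ℤ)) (x p.2))
  map_add' x y := by
    funext k
    simp [Finset.sum_add_distrib]
  map_smul' c x := by
    funext k
    simp [Finset.smul_sum]

/-- The equivariant differential `δ^{S¹} = δ₀ + uδ₁ + u²δ₂ + ⋯` on `C⁻`. -/
def deltaNeg (S : S1Struct K C) (n : ℤ) : NegCyc C n →ₗ[K] NegCyc C (n + 1) :=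
  nExt K C C 1 S.δ n (n + 1)

/-- The map `κ^{S¹} = κ₀ + uκ₁ + u²κ₂ + ⋯ : C⁻ → D⁻`. -/
def kappaNeg {S : S1Struct K C} {T : S1Struct K D} (κ : S1Map K C D S T) (n : ℤ) :
    NegCyc C n →ₗ[K] NegCyc D n :=
  nExt K C D 0 (fun i m => tr K D (m - 2 * (i : ℤ)) (m + 0 - 2 * (i : ℤ)) ∘ₗ κ.κ i m) n n

/-- The map `H = h₀ + uh₁ + u²h₂ + ⋯ : C⁻ → D⁻[-1]`. -/
def homotopyNeg {S : S1Struct K C} {T : S1Struct K D} {κ κ' : S1Map K C D S T}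
    (ht : S1Homotopy K C D κ κ') (n : ℤ) : NegCyc C n →ₗ[K] NegCyc D (n - 1) :=
  nExt K C D (-1) (fun i m => tr K D (m - 2 * (i : ℤ) - 1) (m + (-1) - 2 * (i : ℤ)) ∘ₗ ht.h i m)
    n (n - 1)

/-- The degree `n` part of the periodic complex `C^∧ = C((u))`, as a submodule of all
families `(aᵢ)_{i ∈ ℤ}` with `aᵢ ∈ C^{n-2i}`: those with `aᵢ = 0` for all sufficiently
negative `i` (formal Laurent series). -/
def PerSub (n : ℤ) : Submodule K ((i : ℤ) → C (n - 2 * i)) where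
  carrier := {x | ∃ N : ℤ, ∀ i < N, x i = 0}
  add_mem' := by
    rintro a b ⟨Na, ha⟩ ⟨Nb, hb⟩
    refine ⟨min Na Nb, fun i hi => ?_⟩
    have h1 := ha i (lt_of_lt_of_le hi (min_le_left _ _))
    have h2 := hb i (lt_of_lt_of_le hi (min_le_right _ _))
    show a i + b i = 0
    rw [h1, h2, add_zero]
  zero_mem' := ⟨0, fun _ _ => rfl⟩
  smul_mem' := by
    rintro c a ⟨N, hN⟩
    refine ⟨N, fun i hi => ?_⟩
    show c • a i = 0
    rw [hN i hi, smul_zero]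

/-- The degree `n` part of the periodic complex `C^∧ = C((u))`. -/
abbrev PerCyc (n : ℤ) : Type := ↥(PerSub K C n)

lemma natle_finite (m : ℤ) : Set.Finite {i : ℕ | (i : ℤ) ≤ m} := by
  apply Set.Finite.subset (Set.finite_Iic m.toNat)
  intro i hi
  simp only [Set.mem_setOf_eq] at hi
  simp only [Set.mem_Iic]
  omega

lemma uExt_sf (e : ℤ) (F : (i : ℕ) → (m : ℤ) → C m →ₗ[K] D (m + e - 2 * (i : ℤ))) (n t : ℤ)
    (x : PerCyc K C n) (k : ℤ) :
    (Function.support fun i : ℕ =>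
      tr K D (n - 2 * (k - (i : ℤ)) + e - 2 * (i : ℤ)) (t - 2 * k)
        (F i (n - 2 * (k - (i : ℤ))) (x.1 (k - (i : ℤ))))).Finite := by
  obtain ⟨N, hN⟩ := x.2
  apply Set.Finite.subset (natle_finite (k - N))
  intro i hi
  simp only [Function.mem_support] at hi
  simp only [Set.mem_setOf_eq]
  by_contra hcon
  push_neg at hcon
  rw [hN (k - (i : ℤ)) (by omega)] at hi
  simp at hi

/-- Componentwise extension of a sequence of operations `F i` of degree `e - 2i` to the
Laurent series complexes: `(∑ aᵢ uⁱ) ↦ ∑_k (∑_{i≥0} F i (a_{k-i})) u^k`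
(valued in the ambient product). -/
def uExtAux (e : ℤ) (F : (i : ℕ) → (m : ℤ) → C m →ₗ[K] D (m + e - 2 * (i : ℤ))) (n t : ℤ) :
    PerCyc K C n →ₗ[K] ((k : ℤ) → D (t - 2 * k)) where
  toFun x k := ∑ᶠ i : ℕ,
    tr K D (n - 2 * (k - (i : ℤ)) + e - 2 * (i : ℤ)) (t - 2 * k)
      (F i (n - 2 * (k - (i : ℤ))) (x.1 (k - (i : ℤ))))
  map_add' x y := by
    funext k
    simp only [Pi.add_apply]
    rw [← finsum_add_distrib (uExt_sf K C D e F n t x k) (uExt_sf K C D e F n t y k)]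
    apply finsum_congr
    intro i
    have hxy : (↑(x + y) : (i : ℤ) → C (n - 2 * i)) (k - (i : ℤ))
        = x.1 (k - (i : ℤ)) + y.1 (k - (i : ℤ)) := rfl
    rw [hxy, map_add, map_add]
  map_smul' c x := by
    funext k
    simp only [Pi.smul_apply, RingHom.id_apply]
    rw [smul_finsum' c (uExt_sf K C D e F n t x k)]
    apply finsum_congr
    intro i
    have hcx : (↑(c • x) : (i : ℤ) → C (n - 2 * i)) (k - (i : ℤ))
        = c • x.1 (k - (i : ℤ)) := rfl
    rw [hcx, map_smul, map_smul]

@[simp] lemma uExtAux_apply (e : ℤ) (F : (i : ℕ) → (m : ℤ) → C m →ₗ[K] D (m + e - 2 * (i : ℤ)))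
    (n t : ℤ) (x : PerCyc K C n) (k : ℤ) :
    uExtAux K C D e F n t x k = ∑ᶠ i : ℕ,
      tr K D (n - 2 * (k - (i : ℤ)) + e - 2 * (i : ℤ)) (t - 2 * k)
        (F i (n - 2 * (k - (i : ℤ))) (x.1 (k - (i : ℤ)))) := rfl

lemma uExtAux_mem (e : ℤ) (F : (i : ℕ) → (m : ℤ) → C m →ₗ[K] D (m + e - 2 * (i : ℤ)))
    (n t : ℤ) (x : PerCyc K C n) : uExtAux K C D e F n t x ∈ PerSub K D t := by
  obtain ⟨N, hN⟩ := x.2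
  refine ⟨N, fun k hk => ?_⟩
  rw [uExtAux_apply]
  apply finsum_eq_zero_of_forall_eq_zero
  intro i
  rw [hN (k - (i : ℤ)) (by omega)]
  simp

/-- Componentwise extension of a sequence of operations `F i` of degree `e - 2i` to the
complexes of formal Laurent series. -/
def uExt (e : ℤ) (F : (i : ℕ) → (m : ℤ) → C m →ₗ[K] D (m + e - 2 * (i : ℤ))) (n t : ℤ) :
    PerCyc K C n →ₗ[K] PerCyc K D t :=
  LinearMap.codRestrict (PerSub K D t) (uExtAux K C D e F n t) (uExtAux_mem K C D e F n t)

@[simp] lemma uExt_coe_apply (e : ℤ) (F : (i : ℕ) → (m : ℤ) → C m →ₗ[K] D (m + e - 2 * (i : ℤ)))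
    (n t : ℤ) (x : PerCyc K C n) (k : ℤ) :
    (uExt K C D e F n t x).1 k = ∑ᶠ i : ℕ,
      tr K D (n - 2 * (k - (i : ℤ)) + e - 2 * (i : ℤ)) (t - 2 * k)
        (F i (n - 2 * (k - (i : ℤ))) (x.1 (k - (i : ℤ)))) := rfl

/-- The equivariant differential `δ^{S¹} = δ₀ + uδ₁ + u²δ₂ + ⋯` on `C^∧ = C((u))`. -/
def deltaPer (S : S1Struct K C) (n : ℤ) : PerCyc K C n →ₗ[K] PerCyc K C (n + 1) :=
  uExt K C C 1 S.δ n (n + 1)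

/-- The map `κ^{S¹} = κ₀ + uκ₁ + u²κ₂ + ⋯ : C^∧ → D^∧`. -/
def kappaPer {S : S1Struct K C} {T : S1Struct K D} (κ : S1Map K C D S T) (n : ℤ) :
    PerCyc K C n →ₗ[K] PerCyc K D n :=
  uExt K C D 0 (fun i m => tr K D (m - 2 * (i : ℤ)) (m + 0 - 2 * (i : ℤ)) ∘ₗ κ.κ i m) n n

/-- The map `H = h₀ + uh₁ + u²h₂ + ⋯ : C^∧ → D^∧[-1]`. -/
def homotopyPer {S : S1Struct K C} {T : S1Struct K D} {κ κ' : S1Map K C D S T}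
    (ht : S1Homotopy K C D κ κ') (n : ℤ) : PerCyc K C n →ₗ[K] PerCyc K D (n - 1) :=
  uExt K C D (-1) (fun i m => tr K D (m - 2 * (i : ℤ) - 1) (m + (-1) - 2 * (i : ℤ)) ∘ₗ ht.h i m)
    n (n - 1)

/-- The submodule `u^m C⁻ ⊆ C^∧` of Laurent series supported in powers `≥ m`. -/
def uPow (m : ℤ) (n : ℤ) : Submodule K (PerCyc K C n) where
  carrier := {x | ∀ i < m, x.1 i = 0}
  add_mem' := by
    intro a b ha hb i hi
    show a.1 i + b.1 i = 0
    rw [ha i hi, hb i hi, add_zero]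
  zero_mem' := fun _ _ => rfl
  smul_mem' := by
    intro c a ha i hi
    show c • a.1 i = 0
    rw [ha i hi, smul_zero]

lemma uExt_mem_uPow (e : ℤ) (F : (i : ℕ) → (m : ℤ) → C m →ₗ[K] D (m + e - 2 * (i : ℤ)))
    (n t : ℤ) (m : ℤ) (x : PerCyc K C n) (hx : x ∈ uPow K C m n) :
    uExt K C D e F n t x ∈ uPow K D m t := by
  intro k hk
  rw [uExt_coe_apply]
  apply finsum_eq_zero_of_forall_eq_zero
  intro i
  rw [hx (k - (i : ℤ)) (by omega)]
  simp

/-- The restriction of `δ^{S¹}` to the subcomplex `u^m C⁻ ⊆ C^∧`. -/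
def deltaRes (S : S1Struct K C) (m n : ℤ) : ↥(uPow K C m n) →ₗ[K] ↥(uPow K C m (n + 1)) :=
  (deltaPer K C S n).restrict (fun x hx => uExt_mem_uPow K C C 1 S.δ n (n + 1) m x hx)

/-- The restriction of `κ^{S¹}` to the subcomplexes `u^m C⁻ → u^m D⁻`. -/
def kappaRes {S : S1Struct K C} {T : S1Struct K D} (κ : S1Map K C D S T) (m n : ℤ) :
    ↥(uPow K C m n) →ₗ[K] ↥(uPow K D m n) :=
  (kappaPer K C D κ n).restrict
    (fun x hx => uExt_mem_uPow K C D 0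
      (fun i m => tr K D (m - 2 * (i : ℤ)) (m + 0 - 2 * (i : ℤ)) ∘ₗ κ.κ i m) n n m x hx)

/-- The degree `n` part of the quotient complex `C⁺ = C^∧ / uC⁻`. -/
abbrev QtC (n : ℤ) : Type := PerCyc K C n ⧸ uPow K C 1 n

/-- The operator on `C⁺ = C^∧/uC⁻` induced by `δ^{S¹}`. -/
def deltaPlus (S : S1Struct K C) (n : ℤ) : QtC K C n →ₗ[K] QtC K C (n + 1) :=
  Submodule.mapQ _ _ (deltaPer K C S n)
    (fun x hx => uExt_mem_uPow K C C 1 S.δ n (n + 1) 1 x hx)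

/-- The map `C⁺ → D⁺` induced by `κ^{S¹}`. -/
def kappaPlus {S : S1Struct K C} {T : S1Struct K D} (κ : S1Map K C D S T) (n : ℤ) :
    QtC K C n →ₗ[K] QtC K D n :=
  Submodule.mapQ _ _ (kappaPer K C D κ n)
    (fun x hx => uExt_mem_uPow K C D 0
      (fun i m => tr K D (m - 2 * (i : ℤ)) (m + 0 - 2 * (i : ℤ)) ∘ₗ κ.κ i m) n n 1 x hx)

/-- The map `C⁺ → D⁺[-1]` induced by an S¹-equivariant chain homotopy. -/
def homotopyPlus {S : S1Struct K C} {T : S1Struct K D} {κ κ' : S1Map K C D S T}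
    (ht : S1Homotopy K C D κ κ') (n : ℤ) : QtC K C n →ₗ[K] QtC K D (n - 1) :=
  Submodule.mapQ _ _ (homotopyPer K C D ht n)
    (fun x hx => uExt_mem_uPow K C D (-1)
      (fun i m => tr K D (m - 2 * (i : ℤ) - 1) (m + (-1) - 2 * (i : ℤ)) ∘ₗ ht.h i m)
      n (n - 1) 1 x hx)

/-- The homology in degree `n` of a cochain complex of `K`-modules given degreewise by
`d n : F n → F (n+1)`: the kernel of `d n` modulo the image of `d (n-1)`. -/
abbrev HomologyOf (F : ℤ → Type) [∀ n, AddCommGroup (F n)] [∀ n, Module K (F n)]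
    (d : (n : ℤ) → F n →ₗ[K] F (n + 1)) (n : ℤ) : Type :=
  ↥(LinearMap.ker (d n)) ⧸
    Submodule.comap (LinearMap.ker (d n)).subtype
      (LinearMap.range (pcast K F (show n - 1 + 1 = n by ring) ∘ₗ d (n - 1)))

/-- A chain map `f` between cochain complexes `(F, dF)` and `(G, dG)` induces an isomorphism
on homology in every degree: for every `n` there is a bijective linear map between the homology
groups sending the class of a cycle `x` to the class of the cycle `f n x`. -/
def InducesIso (F : ℤ → Type) [∀ n, AddCommGroup (F n)] [∀ n, Module K (F n)]
    (G : ℤ → Type) [∀ n, AddCommGroup (G n)] [∀ n, Module K (G n)]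
    (dF : (n : ℤ) → F n →ₗ[K] F (n + 1)) (dG : (n : ℤ) → G n →ₗ[K] G (n + 1))
    (f : (n : ℤ) → F n →ₗ[K] G n) : Prop :=
  ∀ n : ℤ, ∃ φ : HomologyOf K F dF n →ₗ[K] HomologyOf K G dG n,
    Function.Bijective φ ∧
    ∀ (x : F n) (hx : x ∈ LinearMap.ker (dF n)) (hy : f n x ∈ LinearMap.ker (dG n)),
      φ (Submodule.Quotient.mk ⟨x, hx⟩) = Submodule.Quotient.mk ⟨f n x, hy⟩

/-- The differential `δ₀` of an S¹-complex, as a degree `+1` operator. -/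
def d0 (S : S1Struct K C) (n : ℤ) : C n →ₗ[K] C (n + 1) :=
  tr K C (n + 1 - 2 * ((0 : ℕ) : ℤ)) (n + 1) ∘ₗ S.δ 0 n

/-- The leading term `κ₀` of an S¹-equivariant chain map, as a degree `0` operator. -/
def k0 {S : S1Struct K C} {T : S1Struct K D} (κ : S1Map K C D S T) (n : ℤ) :
    C n →ₗ[K] D n :=
  tr K D (n - 2 * ((0 : ℕ) : ℤ)) n ∘ₗ κ.κ 0 n

/-- The degree `d` part of the truncated complex `C⟨m,n⟩ = uⁿC⁻/u^mC⁻`: families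
`(a_p)_{n ≤ p ≤ m-1}` with `a_p ∈ C^{d-2p}`, realized as families over `ℤ`
vanishing outside `[n, m-1]`. -/
def truncSub (m n d : ℤ) : Submodule K ((p : ℤ) → C (d - 2 * p)) where
  carrier := {a | ∀ p : ℤ, (p < n ∨ m ≤ p) → a p = 0}
  add_mem' := by
    intro a b ha hb p hp
    show a p + b p = 0
    rw [ha p hp, hb p hp, add_zero]
  zero_mem' := fun _ _ => rfl
  smul_mem' := by
    intro c a ha p hp
    show c • a p = 0
    rw [ha p hp, smul_zero]

/-- The differential of the truncated complex `C⟨m,n⟩`, with components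
`(δ^{S¹}x)_q = ∑_{i ≥ 0, q-i ≥ n} δᵢ(x_{q-i})` for `n ≤ q ≤ m-1`
(valued in the ambient product). -/
def truncDAux (S : S1Struct K C) (m n d : ℤ) :
    ↥(truncSub K C m n d) →ₗ[K] ((q : ℤ) → C (d + 1 - 2 * q)) where
  toFun x q :=
    if n ≤ q ∧ q < m then
      ∑ i ∈ Finset.range ((q - n).toNat + 1),
        tr K C (d - 2 * (q - (i : ℤ)) + 1 - 2 * (i : ℤ)) (d + 1 - 2 * q)
          (S.δ i (d - 2 * (q - (i : ℤ))) (x.1 (q - (i : ℤ))))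
    else 0
  map_add' x y := by
    funext q
    by_cases h : n ≤ q ∧ q < m
    · simp only [Pi.add_apply, if_pos h]
      rw [← Finset.sum_add_distrib]
      apply Finset.sum_congr rfl
      intro i _
      have hxy : (↑(x + y) : (p : ℤ) → C (d - 2 * p)) (q - (i : ℤ))
          = x.1 (q - (i : ℤ)) + y.1 (q - (i : ℤ)) := rfl
      rw [hxy, map_add, map_add]
    · simp only [Pi.add_apply, if_neg h, add_zero]
  map_smul' c x := by
    funext q
    by_cases h : n ≤ q ∧ q < m
    · simp only [Pi.smul_apply, RingHom.id_apply, if_pos h]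
      rw [Finset.smul_sum]
      apply Finset.sum_congr rfl
      intro i _
      have hcx : (↑(c • x) : (p : ℤ) → C (d - 2 * p)) (q - (i : ℤ))
          = c • x.1 (q - (i : ℤ)) := rfl
      rw [hcx, map_smul, map_smul]
    · simp only [Pi.smul_apply, RingHom.id_apply, if_neg h, smul_zero]

@[simp] lemma truncDAux_apply (S : S1Struct K C) (m n d : ℤ) (x : ↥(truncSub K C m n d))
    (q : ℤ) : truncDAux K C S m n d x q =
    if n ≤ q ∧ q < m then
      ∑ i ∈ Finset.range ((q - n).toNat + 1),
        tr K C (d - 2 * (q - (i : ℤ)) + 1 - 2 * (i : ℤ)) (d + 1 - 2 * q)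
          (S.δ i (d - 2 * (q - (i : ℤ))) (x.1 (q - (i : ℤ))))
    else 0 := rfl

lemma truncDAux_mem (S : S1Struct K C) (m n d : ℤ) (x : ↥(truncSub K C m n d)) :
    truncDAux K C S m n d x ∈ truncSub K C m n (d + 1) := by
  intro q hq
  rw [truncDAux_apply, if_neg (by omega)]

/-- The differential of the truncated complex `C⟨m,n⟩ = uⁿC⁻/u^mC⁻`. -/
def truncD (S : S1Struct K C) (m n d : ℤ) :
    ↥(truncSub K C m n d) →ₗ[K] ↥(truncSub K C m n (d + 1)) :=
  LinearMap.codRestrict _ (truncDAux K C S m n d) (truncDAux_mem K C S m n d)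

/-- The chain map `κ⟨m,n⟩ : C⟨m,n⟩ → D⟨m,n⟩` induced by an S¹-equivariant chain map,
with components `(κ⟨m,n⟩x)_q = ∑_{i ≥ 0, q-i ≥ n} κᵢ(x_{q-i})`
(valued in the ambient product). -/
def truncKAux {S : S1Struct K C} {T : S1Struct K D} (κ : S1Map K C D S T) (m n d : ℤ) :
    ↥(truncSub K C m n d) →ₗ[K] ((q : ℤ) → D (d - 2 * q)) where
  toFun x q :=
    if n ≤ q ∧ q < m then
      ∑ i ∈ Finset.range ((q - n).toNat + 1),
        tr K D (d - 2 * (q - (i : ℤ)) - 2 * (i : ℤ)) (d - 2 * q)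
          (κ.κ i (d - 2 * (q - (i : ℤ))) (x.1 (q - (i : ℤ))))
    else 0
  map_add' x y := by
    funext q
    by_cases h : n ≤ q ∧ q < m
    · simp only [Pi.add_apply, if_pos h]
      rw [← Finset.sum_add_distrib]
      apply Finset.sum_congr rfl
      intro i _
      have hxy : (↑(x + y) : (p : ℤ) → C (d - 2 * p)) (q - (i : ℤ))
          = x.1 (q - (i : ℤ)) + y.1 (q - (i : ℤ)) := rfl
      rw [hxy, map_add, map_add]
    · simp only [Pi.add_apply, if_neg h, add_zero]
  map_smul' c x := by
    funext q
    by_cases h : n ≤ q ∧ q < m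
    · simp only [Pi.smul_apply, RingHom.id_apply, if_pos h]
      rw [Finset.smul_sum]
      apply Finset.sum_congr rfl
      intro i _
      have hcx : (↑(c • x) : (p : ℤ) → C (d - 2 * p)) (q - (i : ℤ))
          = c • x.1 (q - (i : ℤ)) := rfl
      rw [hcx, map_smul, map_smul]
    · simp only [Pi.smul_apply, RingHom.id_apply, if_neg h, smul_zero]

lemma truncKAux_mem {S : S1Struct K C} {T : S1Struct K D} (κ : S1Map K C D S T)
    (m n d : ℤ) (x : ↥(truncSub K C m n d)) :
    truncKAux K C D κ m n d x ∈ truncSub K D m n d := by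
  intro q hq
  show (if n ≤ q ∧ q < m then _ else 0) = 0
  rw [if_neg (by omega)]

/-- The chain map `κ⟨m,n⟩ : C⟨m,n⟩ → D⟨m,n⟩` induced by an S¹-equivariant chain map. -/
def truncK {S : S1Struct K C} {T : S1Struct K D} (κ : S1Map K C D S T) (m n d : ℤ) :
    ↥(truncSub K C m n d) →ₗ[K] ↥(truncSub K D m n d) :=
  LinearMap.codRestrict _ (truncKAux K C D κ m n d) (truncKAux_mem K C D κ m n d)

end Lib


section Helpers

variable {K : Type} [CommRing K]
variable {C : ℤ → Type} [∀ n, AddCommGroup (C n)] [∀ n, Module K (C n)]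
variable {D : ℤ → Type} [∀ n, AddCommGroup (D n)] [∀ n, Module K (D n)]
variable {E : ℤ → Type} [∀ n, AddCommGroup (E n)] [∀ n, Module K (E n)]

lemma tr_self (a : ℤ) (x : C a) : tr K C a a x = x := by
  simp [tr, pcast]

lemma tr_tr {a b c : ℤ} (h : a = b) (x : C a) : tr K C b c (tr K C a b x) = tr K C a c x := by
  subst h; rw [tr_self]

lemma tr_ne {a b : ℤ} (h : a ≠ b) (x : C a) : tr K C a b x = 0 := by
  simp [tr, h]

lemma tr_fam {J : Type} (g : J → ℤ) (x : (i : J) → C (g i)) {i j : J} (h : i = j) :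
    x j = tr K C (g i) (g j) (x i) := by
  subst h; rw [tr_self]

/-- naturality of `tr` for a family of maps -/
lemma tr_nat (f : ℤ → ℤ) (G : (m : ℤ) → C m →ₗ[K] D (f m)) {a b : ℤ} (h : a = b) (c : ℤ)
    (v : C a) : tr K D (f b) c (G b (tr K C a b v)) = tr K D (f a) c (G a v) := by
  subst h; rw [tr_self]

lemma tr_inj {a b : ℤ} (h : a = b) {x y : C a} (e : tr K C a b x = tr K C a b y) : x = y := by
  subst h; simpa [tr_self] using e

/-- the cone formulation of a quasi-isomorphism -/
def ConeAcyclic (F : ℤ → Type) [∀ n, AddCommGroup (F n)] [∀ n, Module K (F n)]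
    (G : ℤ → Type) [∀ n, AddCommGroup (G n)] [∀ n, Module K (G n)]
    (dF : (n : ℤ) → F n →ₗ[K] F (n + 1)) (dG : (n : ℤ) → G n →ₗ[K] G (n + 1))
    (f : (n : ℤ) → F n →ₗ[K] G n) : Prop :=
  ∀ (n : ℤ) (x : F (n + 1 + 1)) (y : G (n + 1)), dF _ x = 0 → f _ x = dG _ y →
    ∃ (w : F (n + 1)) (z : G n), x = dF _ w ∧ y = f _ w - dG _ z

lemma range_aux (F : ℤ → Type) [∀ n, AddCommGroup (F n)] [∀ n, Module K (F n)]
    (d : (n : ℤ) → F n →ₗ[K] F (n + 1)) (k a : ℤ) (h : a + 1 = k + 1) :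
    LinearMap.range (pcast K F h ∘ₗ d a) = LinearMap.range (d k) := by
  obtain rfl : a = k := by omega
  rfl

section Iso
variable (F : ℤ → Type) [∀ n, AddCommGroup (F n)] [∀ n, Module K (F n)]
    (G : ℤ → Type) [∀ n, AddCommGroup (G n)] [∀ n, Module K (G n)]
    (dF : (n : ℤ) → F n →ₗ[K] F (n + 1)) (dG : (n : ℤ) → G n →ₗ[K] G (n + 1))
    (f : (n : ℤ) → F n →ₗ[K] G n)

lemma mk_eq_zero_iff (k : ℤ) (x : F (k + 1)) (hx : x ∈ LinearMap.ker (dF (k + 1))) :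
    (Submodule.Quotient.mk ⟨x, hx⟩ : HomologyOf K F dF (k + 1)) = 0 ↔ ∃ w, dF k w = x := by
  rw [Submodule.Quotient.mk_eq_zero, Submodule.mem_comap, range_aux F dF k (k + 1 - 1) (by ring)]
  rfl

lemma cone_of_iso (hf : ∀ n x, f (n + 1) (dF n x) = dG n (f n x))
    (ddF : ∀ n x, dF (n + 1) (dF n x) = 0) (ddG : ∀ n x, dG (n + 1) (dG n x) = 0)
    (h : InducesIso K F G dF dG f) : ConeAcyclic F G dF dG f := by
  intro n x y hx hy
  obtain ⟨φ, hφ, hφ'⟩ := h (n + 1 + 1)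
  have hfx : f _ x ∈ LinearMap.ker (dG (n + 1 + 1)) := by
    rw [LinearMap.mem_ker, ← hf, hx, map_zero]
  have h1 := hφ' x hx hfx
  rw [(mk_eq_zero_iff G dG (n + 1) _ hfx).2 ⟨y, hy.symm⟩] at h1
  have h2 := hφ.1 (h1.trans (map_zero φ).symm)
  obtain ⟨w0, hw0⟩ := (mk_eq_zero_iff F dF (n + 1) _ hx).1 h2
  obtain ⟨ψ, hψ, hψ'⟩ := h (n + 1)
  have hc : f _ w0 - y ∈ LinearMap.ker (dG (n + 1)) := by
    rw [LinearMap.mem_ker, map_sub, ← hf, hw0, hy, sub_self]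
  obtain ⟨q, hq⟩ := hψ.2 (Submodule.Quotient.mk ⟨_, hc⟩)
  obtain ⟨⟨c, hcc⟩, rfl⟩ := Submodule.Quotient.mk_surjective _ q
  have hfc : f _ c ∈ LinearMap.ker (dG (n + 1)) := by
    rw [LinearMap.mem_ker, ← hf, hcc, map_zero]
  rw [hψ' c hcc hfc] at hq
  have h3 := sub_eq_zero.2 hq.symm
  rw [← Submodule.Quotient.mk_sub] at h3
  obtain ⟨z, hz⟩ := (mk_eq_zero_iff G dG n _ (sub_mem hc hfc)).1 h3
  refine ⟨w0 - c, z, ?_, ?_⟩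
  · rw [map_sub, hw0, LinearMap.mem_ker.1 hcc, sub_zero]
  · rw [hz, map_sub]; abel

lemma iso_of_cone (hf : ∀ n x, f (n + 1) (dF n x) = dG n (f n x))
    (ddF : ∀ n x, dF (n + 1) (dF n x) = 0) (ddG : ∀ n x, dG (n + 1) (dG n x) = 0)
    (h : ConeAcyclic F G dF dG f) : InducesIso K F G dF dG f := by
  intro n
  obtain ⟨n, rfl⟩ : ∃ m, n = m + 1 + 1 := ⟨n - 2, by ring⟩
  have hk : ∀ x ∈ LinearMap.ker (dF (n + 1 + 1)), f _ x ∈ LinearMap.ker (dG (n + 1 + 1)) := by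
    intro x hx
    rw [LinearMap.mem_ker, ← hf, hx, map_zero]
  refine ⟨Submodule.mapQ _ _ ((f (n + 1 + 1)).restrict hk) ?_, ⟨?_, ?_⟩, ?_⟩
  · rintro ⟨x, hx⟩ hx'
    have := (mk_eq_zero_iff F dF (n + 1) x hx).1 ((Submodule.Quotient.mk_eq_zero _).2 hx')
    obtain ⟨w, rfl⟩ := this
    exact (Submodule.Quotient.mk_eq_zero (Submodule.comap (LinearMap.ker (dG (n + 1 + 1))).subtype _)).1
      ((mk_eq_zero_iff G dG (n + 1) _ (hk _ hx)).2 ⟨f _ w, (hf _ _).symm⟩)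
  · rw [injective_iff_map_eq_zero]
    intro q hq
    obtain ⟨⟨x, hx⟩, rfl⟩ := Submodule.Quotient.mk_surjective _ q
    obtain ⟨y, hy⟩ := (mk_eq_zero_iff G dG (n + 1) _ (hk x hx)).1 hq
    obtain ⟨w, z, hw, -⟩ := h n x y hx hy.symm
    exact (mk_eq_zero_iff F dF (n + 1) _ hx).2 ⟨w, hw.symm⟩
  · intro q
    obtain ⟨⟨y, hy⟩, rfl⟩ := Submodule.Quotient.mk_surjective _ q
    obtain ⟨w, z, hw, hz⟩ := h (n + 1) 0 y (map_zero _) (by rw [map_zero, LinearMap.mem_ker.1 hy])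
    refine ⟨Submodule.Quotient.mk ⟨w, hw.symm⟩, ?_⟩
    refine sub_eq_zero.1 ?_
    refine Eq.trans (Submodule.Quotient.mk_sub _).symm ?_
    refine (mk_eq_zero_iff G dG (n + 1) _ (sub_mem (hk w hw.symm) hy)).2 ⟨z, ?_⟩
    show dG _ z = f _ w - y
    rw [hz]; abel
  · intro x hx hy
    rfl

end Iso

/-! Laurent series -/

lemma uExt_apply_sum (e : ℤ) (F : (i : ℕ) → (m : ℤ) → C m →ₗ[K] D (m + e - 2 * (i : ℤ)))
    (n t N : ℤ) (x : PerCyc K C n) (hx : x ∈ uPow K C N n) (k : ℤ) (M : ℕ) (hM : k - N < M) :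
    (uExt K C D e F n t x).1 k = ∑ i ∈ range M,
      tr K D (n - 2 * (k - (i : ℤ)) + e - 2 * (i : ℤ)) (t - 2 * k)
        (F i (n - 2 * (k - (i : ℤ))) (x.1 (k - (i : ℤ)))) := by
  rw [uExt_coe_apply]
  apply finsum_eq_sum_of_support_subset
  intro i hi
  rw [Function.mem_support] at hi
  by_contra hcon
  apply hi
  simp only [coe_range, Set.mem_Iio, not_lt] at hcon
  rw [hx (k - (i : ℤ)) (by omega)]
  simp

lemma uExt_lead (e : ℤ) (F : (i : ℕ) → (m : ℤ) → C m →ₗ[K] D (m + e - 2 * (i : ℤ)))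
    (n t N : ℤ) (x : PerCyc K C n) (hx : x ∈ uPow K C N n) :
    (uExt K C D e F n t x).1 N =
      tr K D (n - 2 * N + e - 2 * ((0 : ℕ) : ℤ)) (t - 2 * N) (F 0 (n - 2 * N) (x.1 N)) := by
  rw [uExt_apply_sum e F n t N x hx N 1 (by simp), Finset.sum_range_one]
  rw [tr_fam (K := K) (fun i => n - 2 * i) x.1 (show N = N - ((0 : ℕ) : ℤ) by simp)]
  rw [tr_nat (fun m => m + e - 2 * ((0 : ℕ) : ℤ)) (F 0)]
  simp

lemma sum_square (A : Type) [AddCommGroup A] (M : ℕ) (T : ℕ → ℕ → A)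
    (hT : ∀ i j, M ≤ i + j → T i j = 0) :
    ∑ i ∈ range M, ∑ j ∈ range M, T i j = ∑ l ∈ range M, ∑ p ∈ antidiagonal l, T p.1 p.2 := by
  rw [← Finset.sum_product', Finset.sum_sigma']
  symm
  apply Finset.sum_of_injOn (fun s => s.2)
  · rintro ⟨a, p⟩ ha ⟨b, q⟩ hb hab
    simp only [coe_sigma, Set.mem_sigma_iff, mem_coe, HasAntidiagonal.mem_antidiagonal] at ha hb
    simp only at hab
    subst hab
    obtain ⟨_, rfl⟩ := ha
    obtain ⟨_, rfl⟩ := hb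
    rfl
  · rintro ⟨a, p⟩ ha
    simp only [coe_sigma, Set.mem_sigma_iff, mem_coe, HasAntidiagonal.mem_antidiagonal, mem_range] at ha
    simp only [mem_coe, mem_product, mem_range]
    omega
  · rintro ⟨i, j⟩ hp hn
    apply hT
    by_contra hcon
    apply hn
    refine ⟨⟨i + j, (i, j)⟩, ?_, rfl⟩
    simp
    omega
  · intros; rfl

lemma uExt_comp (e e' : ℤ) (F : (i : ℕ) → (m : ℤ) → C m →ₗ[K] D (m + e - 2 * (i : ℤ)))
    (G : (i : ℕ) → (m : ℤ) → D m →ₗ[K] E (m + e' - 2 * (i : ℤ)))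
    (n t s N : ℤ) (ht : t = n + e) (x : PerCyc K C n) (hx : x ∈ uPow K C N n) (k : ℤ) (M : ℕ)
    (hM : k - N < M) :
    (uExt K D E e' G t s (uExt K C D e F n t x)).1 k = ∑ l ∈ range M, ∑ p ∈ antidiagonal l,
      tr K E (n - 2 * (k - (l : ℤ)) + e - 2 * (p.2 : ℤ) + e' - 2 * (p.1 : ℤ)) (s - 2 * k)
        (G p.1 (n - 2 * (k - (l : ℤ)) + e - 2 * (p.2 : ℤ))
          (F p.2 (n - 2 * (k - (l : ℤ))) (x.1 (k - (l : ℤ))))) := by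
  have key : ∀ j i : ℕ,
      tr K E (t - 2 * (k - (j : ℤ)) + e' - 2 * (j : ℤ)) (s - 2 * k)
        (G j (t - 2 * (k - (j : ℤ)))
          (tr K D (n - 2 * (k - (j : ℤ) - (i : ℤ)) + e - 2 * (i : ℤ)) (t - 2 * (k - (j : ℤ)))
            (F i (n - 2 * (k - (j : ℤ) - (i : ℤ))) (x.1 (k - (j : ℤ) - (i : ℤ)))))) =
      tr K E (n - 2 * (k - ((j + i : ℕ) : ℤ)) + e - 2 * (i : ℤ) + e' - 2 * (j : ℤ)) (s - 2 * k)
        (G j (n - 2 * (k - ((j + i : ℕ) : ℤ)) + e - 2 * (i : ℤ))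
          (F i (n - 2 * (k - ((j + i : ℕ) : ℤ))) (x.1 (k - ((j + i : ℕ) : ℤ))))) := by
    intro j i
    rw [show k - (j : ℤ) - (i : ℤ) = k - ((j + i : ℕ) : ℤ) by push_cast; ring]
    rw [tr_nat (fun m => m + e' - 2 * (j : ℤ)) (G j) (by subst ht; push_cast; ring)]
  rw [uExt_apply_sum e' G t s N _ (uExt_mem_uPow K C D e F n t N x hx) k M hM]
  have h1 : ∀ j ∈ range M,
      tr K E (t - 2 * (k - (j : ℤ)) + e' - 2 * (j : ℤ)) (s - 2 * k)
        (G j (t - 2 * (k - (j : ℤ))) ((uExt K C D e F n t x).1 (k - (j : ℤ)))) =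
      ∑ i ∈ range M,
      tr K E (n - 2 * (k - ((j + i : ℕ) : ℤ)) + e - 2 * (i : ℤ) + e' - 2 * (j : ℤ)) (s - 2 * k)
        (G j (n - 2 * (k - ((j + i : ℕ) : ℤ)) + e - 2 * (i : ℤ))
          (F i (n - 2 * (k - ((j + i : ℕ) : ℤ))) (x.1 (k - ((j + i : ℕ) : ℤ))))) := by
    intro j hj
    rw [uExt_apply_sum e F n t N x hx (k - (j : ℤ)) M (by omega), map_sum, map_sum]
    exact Finset.sum_congr rfl fun i _ => key j i
  rw [Finset.sum_congr rfl h1, sum_square]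
  · refine Finset.sum_congr rfl fun l _ => Finset.sum_congr rfl fun p hp => ?_
    rw [HasAntidiagonal.mem_antidiagonal] at hp
    subst hp
    rfl
  · intro j i hji
    rw [hx (k - ((j + i : ℕ) : ℤ)) (by omega)]
    simp

lemma exists_uPow {n : ℤ} (x : PerCyc K C n) : ∃ N, x ∈ uPow K C N n := x.2

lemma exists_big (k N : ℤ) : ∃ M : ℕ, k - N < M := ⟨(k - N).toNat + 1, by omega⟩

lemma per_dd (S : S1Struct K C) (n : ℤ) (x : PerCyc K C n) :
    deltaPer K C S (n + 1) (deltaPer K C S n x) = 0 := by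
  apply Subtype.ext
  funext k
  obtain ⟨N, hN⟩ := exists_uPow x
  obtain ⟨M, hM⟩ := exists_big k N
  unfold deltaPer
  rw [uExt_comp 1 1 S.δ S.δ n (n + 1) (n + 1 + 1) N rfl x hN k M hM]
  show _ = 0
  apply Finset.sum_eq_zero
  intro l _
  have h := congrArg (tr K C _ (n + 1 + 1 - 2 * k)) (S.rel l (n - 2 * (k - (l : ℤ))) (x.1 (k - (l : ℤ))))
  rw [map_zero, map_sum] at h
  rw [← h]
  refine Finset.sum_congr rfl fun p hp => ?_
  rw [HasAntidiagonal.mem_antidiagonal] at hp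
  rw [tr_tr (by subst hp; push_cast; ring)]

lemma per_kd {S : S1Struct K C} {T : S1Struct K D} (κ : S1Map K C D S T) (n : ℤ)
    (x : PerCyc K C n) :
    kappaPer K C D κ (n + 1) (deltaPer K C S n x) = deltaPer K D T n (kappaPer K C D κ n x) := by
  apply Subtype.ext
  funext k
  obtain ⟨N, hN⟩ := exists_uPow x
  obtain ⟨M, hM⟩ := exists_big k N
  unfold deltaPer kappaPer
  rw [uExt_comp 1 0 S.δ _ n (n + 1) (n + 1) N rfl x hN k M hM,
    uExt_comp 0 1 _ T.δ n n (n + 1) N (by simp) x hN k M hM]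
  refine Finset.sum_congr rfl fun l _ => ?_
  refine Eq.trans ?_ (Finset.Nat.sum_antidiagonal_swap (n := l))
  rw [← sub_eq_zero, ← Finset.sum_sub_distrib]
  have h := congrArg (tr K D _ (n + 1 - 2 * k)) (κ.rel l (n - 2 * (k - (l : ℤ))) (x.1 (k - (l : ℤ))))
  rw [map_zero, map_sum] at h
  rw [← h]
  refine Finset.sum_congr rfl fun p hp => ?_
  rw [HasAntidiagonal.mem_antidiagonal] at hp
  rw [map_sub, tr_tr (by subst hp; push_cast; ring), tr_tr (by subst hp; push_cast; ring)]
  congr 1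
  · simp only [LinearMap.comp_apply]
    rw [tr_tr (by ring)]
  · simp only [LinearMap.comp_apply, Prod.fst_swap, Prod.snd_swap]
    rw [tr_nat (fun m => m + 1 - 2 * (p.2 : ℤ)) (T.δ p.2) (by ring)]

/-- The Laurent series `v u^m`. -/
def sgl (m n : ℤ) (v : C (n - 2 * m)) : PerCyc K C n :=
  ⟨fun i => tr K C (n - 2 * m) (n - 2 * i) v, m, fun i hi => tr_ne (by omega) v⟩

lemma sgl_mem (m n : ℤ) (v : C (n - 2 * m)) : sgl (K := K) m n v ∈ uPow K C m n :=
  fun i hi => tr_ne (by omega) v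

lemma sgl_self (m n : ℤ) (v : C (n - 2 * m)) : (sgl (K := K) m n v).1 m = v := tr_self _ _

lemma uPow_succ {n m : ℤ} {x : PerCyc K C n} (h : x ∈ uPow K C m n) (h0 : x.1 m = 0) :
    x ∈ uPow K C (m + 1) n := by
  intro i hi
  rcases (show i < m ∨ i = m by omega) with h1 | rfl
  · exact h i h1
  · exact h0

lemma d0_dd (S : S1Struct K C) (n : ℤ) (x : C n) : d0 K C S (n + 1) (d0 K C S n x) = 0 := by
  have h := congrArg (tr K C _ (n + 1 + 1)) (S.rel 0 n x)
  rw [map_zero] at h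
  rw [← h]
  simp only [Finset.Nat.antidiagonal_zero, Finset.sum_singleton, d0, LinearMap.comp_apply]
  rw [tr_tr (by simp; ring), tr_nat (fun m => m + 1 - 2 * ((0 : ℕ) : ℤ)) (S.δ 0) (by simp)]

lemma k0_d {S : S1Struct K C} {T : S1Struct K D} (κ : S1Map K C D S T) (n : ℤ) (x : C n) :
    k0 K C D κ (n + 1) (d0 K C S n x) = d0 K D T n (k0 K C D κ n x) := by
  have h := congrArg (tr K D _ (n + 1)) (κ.rel 0 n x)
  rw [map_zero] at h
  rw [← sub_eq_zero, ← h]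
  simp only [Finset.Nat.antidiagonal_zero, Finset.sum_singleton, d0, k0, LinearMap.comp_apply, map_sub]
  rw [tr_tr (by simp), tr_tr (by simp),
    tr_nat (fun m => m - 2 * ((0 : ℕ) : ℤ)) (κ.κ 0) (by simp),
    tr_nat (fun m => m + 1 - 2 * ((0 : ℕ) : ℤ)) (T.δ 0) (by simp)]

lemma delta_lead (S : S1Struct K C) (n m a : ℤ) (x : PerCyc K C n) (hx : x ∈ uPow K C m n)
    (v : C a) (h : a = n - 2 * m) (hv : x.1 m = tr K C a _ v) :
    (deltaPer K C S n x).1 m = tr K C (a + 1) (n + 1 - 2 * m) (d0 K C S a v) := by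
  unfold deltaPer
  rw [uExt_lead 1 S.δ n (n + 1) m x hx, hv]
  rw [tr_nat (fun m => m + 1 - 2 * ((0 : ℕ) : ℤ)) (S.δ 0) h]
  simp only [d0, LinearMap.comp_apply]
  rw [tr_tr (by simp)]

lemma kappa_lead {S : S1Struct K C} {T : S1Struct K D} (κ : S1Map K C D S T)
    (n m a : ℤ) (x : PerCyc K C n) (hx : x ∈ uPow K C m n)
    (v : C a) (h : a = n - 2 * m) (hv : x.1 m = tr K C a _ v) :
    (kappaPer K C D κ n x).1 m = tr K D a (n - 2 * m) (k0 K C D κ a v) := by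
  unfold kappaPer
  rw [uExt_lead 0 _ n n m x hx, hv]
  simp only [k0, LinearMap.comp_apply]
  rw [tr_tr (by simp), tr_tr (by simp), tr_nat (fun m => m - 2 * ((0 : ℕ) : ℤ)) (κ.κ 0) h]

lemma delta_mem (S : S1Struct K C) (n m : ℤ) (x : PerCyc K C n) (hx : x ∈ uPow K C m n) :
    deltaPer K C S n x ∈ uPow K C m (n + 1) := uExt_mem_uPow K C C 1 S.δ n (n + 1) m x hx

lemma kappa_mem {S : S1Struct K C} {T : S1Struct K D} (κ : S1Map K C D S T)
    (n m : ℤ) (x : PerCyc K C n) (hx : x ∈ uPow K C m n) :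
    kappaPer K C D κ n x ∈ uPow K D m n := uExt_mem_uPow K C D 0 _ n n m x hx

/-- One step of the successive approximation. -/
lemma cone_step {S : S1Struct K C} {T : S1Struct K D} (κ : S1Map K C D S T)
    (hcone : ConeAcyclic C D (d0 K C S) (d0 K D T) (k0 K C D κ))
    (n m : ℤ) (x : PerCyc K C (n + 1 + 1)) (y : PerCyc K D (n + 1))
    (hx : deltaPer K C S _ x = 0) (hy : kappaPer K C D κ _ x = deltaPer K D T _ y)
    (mx : x ∈ uPow K C m _) (my : y ∈ uPow K D m _) :
    ∃ (w : PerCyc K C (n + 1)) (z : PerCyc K D n), w ∈ uPow K C m _ ∧ z ∈ uPow K D m _ ∧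
      x - deltaPer K C S _ w ∈ uPow K C (m + 1) _ ∧
      y - (kappaPer K C D κ _ w - deltaPer K D T _ z) ∈ uPow K D (m + 1) _ := by
  have e1 : n - 2 * m + 1 = n + 1 - 2 * m := by ring
  have e2 : n - 2 * m + 1 + 1 = n + 1 + 1 - 2 * m := by ring
  have e3 : n - 2 * m + 1 + 1 + 1 = n + 1 + 1 + 1 - 2 * m := by ring
  obtain ⟨x', hx'⟩ : ∃ x' : C (n - 2 * m + 1 + 1), x.1 m = tr K C _ _ x' :=
    ⟨tr K C _ _ (x.1 m), by rw [tr_tr e2.symm, tr_self]⟩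
  obtain ⟨y', hy'⟩ : ∃ y' : D (n - 2 * m + 1), y.1 m = tr K D _ _ y' :=
    ⟨tr K D _ _ (y.1 m), by rw [tr_tr e1.symm, tr_self]⟩
  have hdx : d0 K C S _ x' = 0 := by
    have h := delta_lead S _ m _ x mx x' e2 hx'
    rw [hx] at h
    apply tr_inj (K := K) e3
    rw [← h, map_zero]
    rfl
  have hky : k0 K C D κ _ x' = d0 K D T _ y' := by
    apply tr_inj (K := K) e2
    rw [← delta_lead T _ m _ y my y' e1 hy', ← hy, ← kappa_lead κ _ m _ x mx x' e2 hx']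
  obtain ⟨w', z', hw, hz⟩ := hcone _ x' y' hdx hky
  refine ⟨sgl m _ (tr K C _ _ w'), sgl m _ z', sgl_mem _ _ _, sgl_mem _ _ _, ?_, ?_⟩
  · refine uPow_succ (sub_mem mx (delta_mem _ _ _ _ (sgl_mem _ _ _))) ?_
    show x.1 m - (deltaPer K C S _ _).1 m = 0
    rw [delta_lead S _ m _ _ (sgl_mem _ _ _) w' e1 (sgl_self _ _ _), hx', hw, sub_self]
  · refine uPow_succ (sub_mem my (sub_mem (kappa_mem _ _ _ _ (sgl_mem _ _ _))
      (delta_mem _ _ _ _ (sgl_mem _ _ _)))) ?_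
    show y.1 m - ((kappaPer K C D κ _ _).1 m - (deltaPer K D T _ _).1 m) = 0
    rw [delta_lead T _ m _ _ (sgl_mem _ _ _) z' rfl (by rw [sgl_self, tr_self]),
      kappa_lead κ _ m _ _ (sgl_mem _ _ _) w' e1 (sgl_self _ _ _), hy', hz, map_sub, sub_self]

lemma uPow_mono {n m m' : ℤ} (h : m ≤ m') {x : PerCyc K C n} (hx : x ∈ uPow K C m' n) :
    x ∈ uPow K C m n := fun i hi => hx i (by omega)

lemma eq_zero_of_uPow {n N : ℤ} {x : PerCyc K C n} (h : ∀ j : ℕ, x ∈ uPow K C (N + j) n) :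
    x = 0 := by
  apply Subtype.ext
  funext i
  exact h ((i - N).toNat + 1) i (by push_cast; omega)

/-- Completeness of the `u`-adic filtration. -/
lemma exists_lim {n N : ℤ} (s : ℕ → PerCyc K C n) (h0 : s 0 = 0)
    (hs : ∀ j : ℕ, s (j + 1) - s j ∈ uPow K C (N + j) n) :
    ∃ L : PerCyc K C n, ∀ j : ℕ, L - s j ∈ uPow K C (N + j) n := by
  have hs' : ∀ j r : ℕ, s (j + r) - s j ∈ uPow K C (N + j) n := by
    intro j r
    induction r with
    | zero => simp
    | succ r ih =>
      have h1 := uPow_mono (m := N + j) (by push_cast; omega) (hs (j + r))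
      have h2 := add_mem h1 ih
      rw [sub_add_sub_cancel] at h2
      exact h2
  have key : ∀ (i : ℤ) (j j' : ℕ), i < N + j → j ≤ j' → (s j').1 i = (s j).1 i := by
    intro i j j' hi hj
    obtain ⟨r, rfl⟩ := Nat.exists_eq_add_of_le hj
    exact sub_eq_zero.1 (hs' j r i hi)
  refine ⟨⟨fun i => (s ((i - N).toNat + 1)).1 i, N, fun i hi => ?_⟩, fun j i hi => ?_⟩
  · show (s ((i - N).toNat + 1)).1 i = 0
    rw [key i 0 _ (by push_cast; omega) (Nat.zero_le _), h0]; rfl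
  · show (s ((i - N).toNat + 1)).1 i - (s j).1 i = 0
    rw [sub_eq_zero]
    rcases le_total j ((i - N).toNat + 1) with h | h
    · exact key i _ _ hi h
    · exact (key i _ _ (by push_cast; omega) h).symm

lemma per_cone {S : S1Struct K C} {T : S1Struct K D} (κ : S1Map K C D S T)
    (hcone : ConeAcyclic C D (d0 K C S) (d0 K D T) (k0 K C D κ)) :
    ConeAcyclic (PerCyc K C) (PerCyc K D) (deltaPer K C S) (deltaPer K D T)
      (kappaPer K C D κ) := by
  intro n x y hx hy
  obtain ⟨N, mx, my⟩ : ∃ N, x ∈ uPow K C N _ ∧ y ∈ uPow K D N _ := by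
    obtain ⟨N1, h1⟩ := exists_uPow x
    obtain ⟨N2, h2⟩ := exists_uPow y
    exact ⟨min N1 N2, uPow_mono (min_le_left _ _) h1, uPow_mono (min_le_right _ _) h2⟩
  let P : ℕ → PerCyc K C (n + 1) × PerCyc K D n → Prop := fun j q =>
    x - deltaPer K C S _ q.1 ∈ uPow K C (N + j) _ ∧
      y - (kappaPer K C D κ _ q.1 - deltaPer K D T _ q.2) ∈ uPow K D (N + j) _
  have step : ∀ (j : ℕ) (q : PerCyc K C (n + 1) × PerCyc K D n),
      ∃ q' : PerCyc K C (n + 1) × PerCyc K D n, P j q → (P (j + 1) q' ∧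
        q'.1 - q.1 ∈ uPow K C (N + j) _ ∧ q'.2 - q.2 ∈ uPow K D (N + j) _) := by
    intro j q
    by_cases hP : P j q
    swap
    · exact ⟨q, fun h => (hP h).elim⟩
    obtain ⟨w, z, mw, mz, h1, h2⟩ := cone_step κ hcone n (N + j) _ _
      (by rw [map_sub, per_dd, hx, sub_zero])
      (by rw [map_sub, map_sub, map_sub, per_dd, per_kd, hy, sub_zero]) hP.1 hP.2
    refine ⟨(q.1 + w, q.2 + z), fun _ => ⟨⟨?_, ?_⟩, ?_, ?_⟩⟩
    · have e : (N + ((j + 1 : ℕ) : ℤ)) = N + j + 1 := by push_cast; ring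
      rw [e]
      simpa [sub_sub] using h1
    · have e : (N + ((j + 1 : ℕ) : ℤ)) = N + j + 1 := by push_cast; ring
      rw [e]
      convert h2 using 1
      simp only [map_add]
      abel
    · simpa using mw
    · simpa using mz
  choose nxt hnxt using step
  let s : ℕ → PerCyc K C (n + 1) × PerCyc K D n := fun j => Nat.rec (0, 0) nxt j
  have hP : ∀ j, P j (s j) := by
    intro j
    induction j with
    | zero =>
      refine ⟨?_, ?_⟩
      · show x - deltaPer K C S _ 0 ∈ uPow K C (N + ((0 : ℕ) : ℤ)) _
        simpa using mx
      · show y - (kappaPer K C D κ _ 0 - deltaPer K D T _ 0) ∈ uPow K D (N + ((0 : ℕ) : ℤ)) _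
        simpa using my
    | succ j ih => exact (hnxt j _ ih).1
  obtain ⟨w, hw⟩ := exists_lim (N := N) (fun j => (s j).1) rfl (fun j => (hnxt j _ (hP j)).2.1)
  obtain ⟨z, hz⟩ := exists_lim (N := N) (fun j => (s j).2) rfl (fun j => (hnxt j _ (hP j)).2.2)
  refine ⟨w, z, sub_eq_zero.1 (eq_zero_of_uPow (N := N) fun j => ?_),
    sub_eq_zero.1 (eq_zero_of_uPow (N := N) fun j => ?_)⟩
  · have h := sub_mem (hP j).1 (delta_mem S _ _ _ (hw j))
    convert h using 1
    simp only [map_sub]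
    abel
  · have h := sub_mem (hP j).2
      (sub_mem (kappa_mem κ _ _ _ (hw j)) (delta_mem T _ _ _ (hz j)))
    convert h using 1
    simp only [map_sub]
    abel

end Helpers

theorem stmt8 (K : Type) [CommRing K]
    (C : ℤ → Type) [∀ n, AddCommGroup (C n)] [∀ n, Module K (C n)]
    (D : ℤ → Type) [∀ n, AddCommGroup (D n)] [∀ n, Module K (D n)]
    (S : S1Struct K C) (T : S1Struct K D) (κ : S1Map K C D S T)
    (hqis : InducesIso K C D (d0 K C S) (d0 K D T) (k0 K C D κ)) :
    InducesIso K (PerCyc K C) (PerCyc K D) (deltaPer K C S) (deltaPer K D T)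
      (kappaPer K C D κ) := by
  exact iso_of_cone _ _ _ _ _ (per_kd κ) (per_dd S) (per_dd T)
    (per_cone κ (cone_of_iso _ _ _ _ _ (k0_d κ) (d0_dd S) (d0_dd T) hqis))
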